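/- For every ε > 0 there exists r₀ such that for every integer r ≥ r₀ there exists n₀ such that for all n ≥ n₀, opt_weak,<,r(S_n) ≥ (1−ε)·(r−1)!·n·log_r(n). -/

import Mathlib

/-- `GuessForce ok V m` means: in the mistake-bound game with weak (yes/no) reinforcement
where queries have type `Q`, guesses have type `A`, and `ok q g f` says that guess `g` is a
correct answer to query `q` when the hidden target is `f`, an (adaptive) adversary whose
answers must stay consistent with some member of the current version space `V` can force
every deterministic learner to be answered "no" at least `m` times.
At each step the adversary chooses a query `q` and, depending on the learner's guess `g`,
either answers "no" (`c g = true`, one more mistake, continuing from the consistent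
functions for which the guess is wrong) or answers "yes" (`c g = false`, continuing from the
consistent functions for which the guess is correct). -/
inductive GuessForce {α Q A : Type*} (ok : Q → A → α → Prop) : Set α → ℕ → Prop where
  | zero (V : Set α) : V.Nonempty → GuessForce ok V 0
  | step (V : Set α) (m : ℕ) (q : Q) (c : A → Bool)
      (hne : ∀ g : A, (if c g then {f ∈ V | ¬ ok q g f} else {f ∈ V | ok q g f}).Nonempty)
      (h : ∀ g : A, GuessForce ok (if c g then {f ∈ V | ¬ ok q g f} else {f ∈ V | ok q g f})
        (if c g then m else m + 1)) :
      GuessForce ok V (m + 1)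

/-- `opt_weak,<,r(F)`: the order model. In each round the adversary chooses `r` distinct
inputs, and the learner guesses the permutation of `{1,…,r}` order-isomorphic to the values
of the target permutation at these inputs; weak reinforcement. -/
noncomputable def optOrder (n r : ℕ) (F : Set (Equiv.Perm (Fin n))) : ℕ :=
  sSup {m | GuessForce
    (fun (x : {x : Fin r → Fin n // Function.Injective x}) (σ : Equiv.Perm (Fin r)) f =>
      ∀ i j, σ i < σ j ↔ f (x.1 i) < f (x.1 j)) F m}

section GuessForce

variable {α Q A : Type*} {ok : Q → A → α → Prop}

theorem GuessForce.mono {V : Set α} {m : ℕ} (h : GuessForce ok V m) :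
    ∀ {W : Set α}, V ⊆ W → GuessForce ok W m := by
  induction h with
  | zero V hV => exact fun hVW => .zero _ (hV.mono hVW)
  | step V m q c hne _ ih =>
    intro W hVW
    have key : ∀ g, (if c g then {f ∈ V | ¬ ok q g f} else {f ∈ V | ok q g f}) ⊆
        (if c g then {f ∈ W | ¬ ok q g f} else {f ∈ W | ok q g f}) := by
      intro g
      split_ifs
      · exact fun f hf => ⟨hVW hf.1, hf.2⟩
      · exact fun f hf => ⟨hVW hf.1, hf.2⟩
    exact .step W m q c (fun g => (hne g).mono (key g)) (fun g => ih g (key g))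

theorem GuessForce.nonempty [Nonempty A] {V : Set α} {m : ℕ} (h : GuessForce ok V m) : V.Nonempty := by
  cases h with
  | zero _ hV => exact hV
  | step _ m q c hne h =>
    obtain ⟨f, hf⟩ := hne (Classical.arbitrary A)
    split_ifs at hf
    exacts [⟨f, hf.1⟩, ⟨f, hf.1⟩]

/-- The number of forced mistakes is smaller than the number of targets, provided that every
target admits a correct guess for every query. -/
theorem GuessForce.lt_ncard [Finite α] [Nonempty A] (hok : ∀ q f, ∃ g, ok q g f) {V : Set α}
    {m : ℕ} (h : GuessForce ok V m) : m < V.ncard := by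
  induction h with
  | zero V hV => exact (Set.ncard_pos).2 hV
  | step V m q c hne h ih =>
    obtain ⟨f, hf⟩ := (GuessForce.step V m q c hne h).nonempty
    obtain ⟨g, hg⟩ := hok q f
    have hi := ih g
    cases hc : c g with
    | true =>
      simp only [hc, if_true] at hi
      have : {f ∈ V | ¬ ok q g f}.ncard < V.ncard :=
        Set.ncard_lt_ncard ⟨fun x hx => hx.1, fun hV => (hV hf).2 hg⟩
      omega
    | false =>
      simp only [hc] at hi
      exact hi.trans_le (Set.ncard_le_ncard fun x hx => hx.1)

/-- By answering "no" to a fixed query until a single answer in `S` remains, the adversary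
forces `S.card - 1` mistakes. -/
theorem GuessForce.of_query_finset (q : Q)
    (huniq : ∀ g g' f, ok q g f → ok q g' f → g = g') {V : Set α} {m : ℕ} (k : ℕ) :
    ∀ S : Finset A, S.card = k + 1 →
      (∀ g ∈ S, GuessForce ok {f ∈ V | ok q g f} m) →
      GuessForce ok {f ∈ V | ∃ g ∈ S, ok q g f} (m + k) := by
  classical
  induction k with
  | zero =>
    intro S hS h
    obtain ⟨g, hg⟩ : S.Nonempty := Finset.card_pos.1 (by omega)
    exact (h g hg).mono fun f hf => ⟨hf.1, g, hg, hf.2⟩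
  | succ k ih =>
    intro S hS h
    obtain ⟨a, -⟩ : S.Nonempty := Finset.card_pos.1 (by omega)
    have : Nonempty A := ⟨a⟩
    have key : ∀ g, GuessForce ok
        {f ∈ {f ∈ V | ∃ g ∈ S, ok q g f} | ¬ ok q g f} (m + k) := by
      intro g
      obtain ⟨g₀, hg₀, hgg⟩ : ∃ g₀ ∈ S, g ∈ S → g₀ = g := by
        by_cases hg : g ∈ S
        · exact ⟨g, hg, fun _ => rfl⟩
        · obtain ⟨g₀, hg₀⟩ : S.Nonempty := Finset.card_pos.1 (by omega)
          exact ⟨g₀, hg₀, fun h => absurd h hg⟩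
      refine (ih (S.erase g₀) (by rw [Finset.card_erase_of_mem hg₀]; omega)
        fun g' hg' => h g' (Finset.mem_of_mem_erase hg')).mono ?_
      rintro f ⟨hf, g', hg', hfg'⟩
      refine ⟨⟨hf, g', Finset.mem_of_mem_erase hg', hfg'⟩, fun hfg => ?_⟩
      obtain rfl := huniq g g' f hfg hfg'
      exact Finset.ne_of_mem_erase hg' (hgg (Finset.mem_of_mem_erase hg')).symm
    exact .step _ _ q (fun _ => true) (fun g => by simpa using (key g).nonempty)
      (fun g => by simpa using key g)

theorem GuessForce.of_query [Fintype A] [Nonempty A] (q : Q)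
    (huniq : ∀ g g' f, ok q g f → ok q g' f → g = g') {V : Set α} {m : ℕ}
    (h : ∀ g, GuessForce ok {f ∈ V | ok q g f} m) :
    GuessForce ok V (m + (Fintype.card A - 1)) := by
  have hA : 0 < Fintype.card A := Fintype.card_pos
  refine (GuessForce.of_query_finset q huniq (V := V) _ Finset.univ ?_ fun g _ => h g).mono
    fun f hf => hf.1
  rw [Finset.card_univ]
  omega

/-- Asking a finite family of queries one after the other. -/
theorem GuessForce.of_queries [Fintype A] [Nonempty A]
    (huniq : ∀ q g g' f, ok q g f → ok q g' f → g = g') {ι : Type*} (q : ι → Q) {m : ℕ}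
    (s : Finset ι) : ∀ V : Set α,
      (∀ a : ι → A, GuessForce ok {f ∈ V | ∀ i ∈ s, ok (q i) (a i) f} m) →
      GuessForce ok V (m + s.card * (Fintype.card A - 1)) := by
  classical
  induction s using Finset.induction_on with
  | empty =>
    intro V h
    simpa using h fun _ => Classical.arbitrary A
  | insert i s hi ih =>
    intro V h
    rw [Finset.card_insert_of_notMem hi, add_mul, one_mul, ← add_assoc]
    refine .of_query (q i) (huniq _) fun g => ih _ fun a => ?_
    refine (h (Function.update a i g)).mono ?_
    rintro f ⟨hf, hs⟩
    refine ⟨⟨hf, by simpa using hs i (Finset.mem_insert_self i s)⟩, fun j hj => ?_⟩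
    have hji : j ≠ i := fun hji => hi (hji ▸ hj)
    simpa [hji] using hs j (Finset.mem_insert_of_mem hj)

end GuessForce

/-- `σ` is the pattern of the values of `f` at the distinct points `x`. -/
abbrev IsPattern (n r : ℕ) (x : {x : Fin r → Fin n // Function.Injective x})
    (σ : Equiv.Perm (Fin r)) (f : Equiv.Perm (Fin n)) : Prop :=
  ∀ i j, σ i < σ j ↔ f (x.1 i) < f (x.1 j)

theorem IsPattern.unique {n r : ℕ} (x : {x : Fin r → Fin n // Function.Injective x})
    (σ τ : Equiv.Perm (Fin r)) (f : Equiv.Perm (Fin n)) (hσ : IsPattern n r x σ f)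
    (hτ : IsPattern n r x τ f) : σ = τ := by
  have h : ∀ i j, σ i < σ j ↔ τ i < τ j := fun i j => (hσ i j).trans (hτ i j).symm
  let e : Fin r ≃o Fin r :=
    { toEquiv := σ.symm.trans τ
      map_rel_iff' := by
        intro a b
        have := h (σ.symm b) (σ.symm a)
        simp only [Equiv.apply_symm_apply] at this
        simpa using not_congr this.symm }
  have he : e = OrderIso.refl _ := Subsingleton.elim _ _
  ext1 i
  have := congrArg (fun e : Fin r ≃o Fin r => e (σ i)) he
  simpa [e] using this.symm

theorem exists_perm_lt_of_lt {n : ℕ} {β : Type*} [LinearOrder β] (b : Fin n → β) :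
    ∃ f : Equiv.Perm (Fin n), ∀ x y, b x < b y → f x < f y := by
  refine ⟨(Tuple.sort b).symm, fun x y hxy => ?_⟩
  by_contra! h
  have := Tuple.monotone_sort b h
  simp only [Function.comp_apply, Equiv.apply_symm_apply] at this
  exact absurd hxy this.not_gt

theorem exists_isPattern {n r : ℕ} (x : {x : Fin r → Fin n // Function.Injective x})
    (f : Equiv.Perm (Fin n)) : ∃ σ, IsPattern n r x σ f := by
  obtain ⟨σ, hσ⟩ := exists_perm_lt_of_lt (fun i => f (x.1 i))
  refine ⟨σ, fun i j => ⟨fun h => ?_, hσ i j⟩⟩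
  by_contra! h'
  rcases h'.lt_or_eq with h' | h'
  · exact absurd h (hσ _ _ h').not_gt
  · obtain rfl := x.2 (f.injective h')
    exact lt_irrefl _ h

theorem le_optOrder {n r m : ℕ} {F : Set (Equiv.Perm (Fin n))}
    (h : GuessForce (IsPattern n r) F m) : m ≤ optOrder n r F :=
  le_csSup ⟨F.ncard, fun _ hm => (GuessForce.lt_ncard (ok := IsPattern n r)
    exists_isPattern hm).le⟩ h

/-- The permutations which are compatible with a preorder given by a key function. -/
def keyCompatible {n : ℕ} (b : Fin n → ℕ) : Set (Equiv.Perm (Fin n)) :=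
  {f | ∀ x y, b x < b y → f x < f y}

/-- If disjoint classes of `r ^ k` points each have constant keys, then querying transversal
`r`-tuples within the classes and refining the key by the ranks in the tuples forces
`k * r ^ (k - 1) * (r ! - 1)` mistakes per class. -/
theorem guessForce_keyCompatible {n r : ℕ} (hr : 0 < r) (k : ℕ) :
    ∀ (ι : Type) [Fintype ι] (e : ι × (Fin k → Fin r) → Fin n) (b : Fin n → ℕ),
      Function.Injective e → (∀ i u v, b (e (i, u)) = b (e (i, v))) →
      GuessForce (IsPattern n r) (keyCompatible b)
        (Fintype.card ι * (k * r ^ (k - 1)) * (r.factorial - 1)) := by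
  induction k with
  | zero =>
    intro ι _ e b _ _
    rw [zero_mul, mul_zero, zero_mul]
    exact .zero _ (exists_perm_lt_of_lt b)
  | succ k ih =>
    intro ι _ e b he hb
    have hcount : Fintype.card ι * ((k + 1) * r ^ (k + 1 - 1)) * (r.factorial - 1) =
        Fintype.card (ι × Fin r) * (k * r ^ (k - 1)) * (r.factorial - 1) +
          (Finset.univ : Finset (ι × (Fin k → Fin r))).card *
            (Fintype.card (Equiv.Perm (Fin r)) - 1) := by
      simp only [Finset.card_univ, Fintype.card_prod, Fintype.card_fin, Fintype.card_perm,
        Fintype.card_pi, Finset.prod_const]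
      cases k with
      | zero => simp
      | succ k => simp only [Nat.add_sub_cancel, pow_succ]; ring
    rw [hcount]
    refine GuessForce.of_queries (fun q g g' f => IsPattern.unique q g g' f)
      (fun p : ι × (Fin k → Fin r) =>
        ⟨fun s => e (p.1, Fin.cons s p.2), fun s t hst => by simpa using he hst⟩) _ _ fun σ => ?_
    let d : Fin n → ℕ :=
      Function.extend e (fun p => (σ (p.1, Fin.tail p.2) (p.2 0) : ℕ)) fun _ => 0
    have hd : ∀ i s a, d (e (i, Fin.cons s a)) = σ (i, a) s := fun i s a => by
      simp [d, he.extend_apply]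
    have hdr : ∀ y, d y < r := fun y => by
      simp only [d, Function.extend_def]
      split_ifs
      exacts [Fin.is_lt _, hr]
    refine (ih (ι × Fin r) (fun p => e (p.1.1, Fin.cons ((σ (p.1.1, p.2)).symm p.1.2) p.2))
      (fun y => r * b y + d y) ?_ ?_).mono ?_
    · rintro ⟨⟨i, s⟩, a⟩ ⟨⟨j, t⟩, c⟩ h
      have h := he h
      simp only [Prod.mk.injEq, Fin.cons_inj] at h
      obtain ⟨rfl, h, rfl⟩ := h
      simpa using h
    · rintro ⟨i, s⟩ u v
      simp only [hd, Equiv.apply_symm_apply]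
      rw [hb i _ (Fin.cons ((σ (i, v)).symm s) v)]
    · intro f hf
      refine ⟨fun x y hxy => hf x y ?_, fun p _ s t => ?_⟩
      · have := hdr x
        have := Nat.mul_le_mul_left r (Nat.succ_le_of_lt hxy)
        simp only [Nat.succ_eq_add_one, mul_add, mul_one] at this
        change r * b x + d x < r * b y + d y
        omega
      · have key : ∀ s t, σ p s < σ p t →
            f (e (p.1, Fin.cons s p.2)) < f (e (p.1, Fin.cons t p.2)) := fun s t h => by
          refine hf _ _ ?_
          simp only [hd]
          rw [hb p.1 _ (Fin.cons t p.2)]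
          exact Nat.add_lt_add_left h _
        refine ⟨key s t, fun h => ?_⟩
        by_contra! h'
        rcases h'.lt_or_eq with h' | h'
        · exact absurd h (key _ _ h').not_gt
        · obtain rfl := (σ p).injective h'
          exact lt_irrefl _ h

theorem mul_le_optOrder_univ {n r q k : ℕ} (hr : 0 < r) (h : q * r ^ k ≤ n) :
    q * (k * r ^ (k - 1)) * (r.factorial - 1) ≤
      optOrder n r (Set.univ : Set (Equiv.Perm (Fin n))) := by
  obtain ⟨e⟩ : Nonempty ((Fin q × (Fin k → Fin r)) ↪ Fin n) :=
    Function.Embedding.nonempty_of_card_le (by simpa using h)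
  have := guessForce_keyCompatible hr k (Fin q) e (fun _ => 0) e.injective fun _ _ _ => rfl
  rw [Fintype.card_fin] at this
  exact le_optOrder (this.mono (Set.subset_univ _))

/-- For every `ε > 0` there exists `r₀` such that for every integer
`r ≥ r₀` there exists `n₀` such that for all `n ≥ n₀`,
`opt_weak,<,r(S_n) ≥ (1−ε)·(r−1)!·n·log_r(n)`. -/
theorem stmt14 (ε : ℝ) (hε : 0 < ε) :
    ∃ r₀ : ℕ, ∀ r : ℕ, r₀ ≤ r → ∃ n₀ : ℕ, ∀ n : ℕ, n₀ ≤ n →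
      (1 - ε) * ((r - 1).factorial : ℝ) * n * Real.logb r n
        ≤ (optOrder n r (Set.univ : Set (Equiv.Perm (Fin n))) : ℝ) := by
  obtain ⟨N, hN⟩ := exists_nat_ge (4 / ε)
  refine ⟨N + 2, fun r hr => ⟨r ^ (N + 2), fun n hn => ?_⟩⟩
  have hr1 : 1 < r := by omega
  have hr0 : (0 : ℝ) < r := by positivity
  have hn0 : n ≠ 0 := by
    have : 0 < r ^ (N + 2) := by positivity
    omega
  have hlog : N + 2 ≤ Nat.log r n := Nat.le_log_of_pow_le hr1 hn
  obtain ⟨k, hk⟩ : ∃ k, Nat.log r n = k + 1 := ⟨Nat.log r n - 1, by omega⟩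
  have hkn : r ^ (k + 1) ≤ n := hk ▸ Nat.pow_log_le_self r hn0
  have hnk : n < r ^ (k + 2) := by
    have := Nat.lt_pow_succ_log_self hr1 n
    rwa [hk] at this
  have hL : Real.logb r n ≤ k + 2 := by
    rw [Real.logb_le_iff_le_rpow (by exact_mod_cast hr1) (by positivity)]
    exact_mod_cast hnk.le
  have hL0 : 0 ≤ Real.logb r n :=
    Real.logb_nonneg (by exact_mod_cast hr1) (by exact_mod_cast Nat.one_le_iff_ne_zero.2 hn0)
  set L := Real.logb r n
  have hmain := mul_le_optOrder_univ (by omega : 0 < r) (Nat.div_mul_le_self n (r ^ k))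
  set q := n / r ^ k
  have hq : n < (q + 1) * r ^ k := by
    rw [mul_comm]
    exact Nat.lt_mul_div_succ n (by positivity)
  have hopt : (q * r ^ k : ℝ) * k * (r.factorial - 1) ≤
      r * optOrder n r (Set.univ : Set (Equiv.Perm (Fin n))) := by
    have hk1 : r ^ k = r * r ^ (k - 1) := by
      rw [← pow_succ']
      congr 1
      omega
    have hf : ((r.factorial - 1 : ℕ) : ℝ) = (r.factorial : ℝ) - 1 := by
      rw [Nat.cast_sub (Nat.factorial_pos r), Nat.cast_one]
    have h := mul_le_mul_of_nonneg_left (Nat.cast_le (α := ℝ) |>.2 hmain) hr0.le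
    have hk1' : (r : ℝ) ^ k = r * r ^ (k - 1) := by exact_mod_cast hk1
    push_cast [hf] at h
    rw [hk1']
    linarith
  have hfac : (r.factorial : ℝ) = r * (r - 1).factorial := by
    exact_mod_cast (Nat.mul_factorial_pred (by omega)).symm
  have hfr : (r : ℝ) ≤ r.factorial := by exact_mod_cast Nat.self_le_factorial r
  have hεr : 4 ≤ ε * r := by
    have h1 : (N : ℝ) ≤ r := by exact_mod_cast (by omega : N ≤ r)
    rw [mul_comm]
    exact (div_le_iff₀ hε).1 (hN.trans h1)
  have hεk : 4 ≤ ε * (k + 2) := by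
    have h1 : (N : ℝ) ≤ k + 2 := by exact_mod_cast (by omega : N ≤ k + 2)
    rw [mul_comm]
    exact (div_le_iff₀ hε).1 (hN.trans h1)
  have hqr : (n : ℝ) * (1 - 1 / r) ≤ q * r ^ k := by
    have h1 : (n : ℝ) < (q + 1) * r ^ k := by exact_mod_cast hq
    have h2 : (r : ℝ) ^ k * r ≤ n := by exact_mod_cast (pow_succ r k ▸ hkn)
    have h3 : (r : ℝ) ^ k ≤ n / r := (le_div_iff₀ hr0).2 h2
    have h4 : (n : ℝ) * (1 - 1 / r) = n - n / r := by ring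
    linarith
  have hP0 : (0 : ℝ) ≤ 1 - 1 / r := by
    have : (1 : ℝ) / r ≤ 1 := by
      rw [div_le_one hr0]
      exact_mod_cast hr1.le
    linarith
  have hFP : (r.factorial : ℝ) * (1 - 1 / r) ≤ r.factorial - 1 := by
    have h1 : (1 : ℝ) ≤ r.factorial / r := (one_le_div₀ hr0).2 hfr
    have h2 : (r.factorial : ℝ) * (1 - 1 / r) = r.factorial - r.factorial / r := by ring
    linarith
  have hP2 : 1 - ε / 2 ≤ (1 - 1 / r : ℝ) ^ 2 := by
    have h1 : (1 : ℝ) / r ≤ ε / 4 := by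
      rw [div_le_div_iff₀ hr0 (by norm_num)]
      linarith
    nlinarith [sq_nonneg ((1 : ℝ) / r)]
  have hkL : (1 - ε) * L ≤ (1 - 1 / r : ℝ) ^ 2 * k := by
    have hk0 : (0 : ℝ) ≤ k := Nat.cast_nonneg k
    rcases le_total 1 ε with h1 | h1
    · have : (1 - ε) * L ≤ 0 := mul_nonpos_of_nonpos_of_nonneg (by linarith) hL0
      have : 0 ≤ (1 - 1 / r : ℝ) ^ 2 * k := by positivity
      linarith
    · have h2 := mul_le_mul_of_nonneg_left hL (sub_nonneg.2 h1)
      have h3 := mul_le_mul_of_nonneg_right hP2 hk0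
      linarith
  refine le_of_mul_le_mul_left ?_ hr0
  refine le_trans ?_ hopt
  calc (r : ℝ) * ((1 - ε) * ((r - 1).factorial : ℝ) * n * L)
      = (r.factorial * n) * ((1 - ε) * L) := by rw [hfac]; ring
    _ ≤ (r.factorial * n) * ((1 - 1 / r : ℝ) ^ 2 * k) := by gcongr
    _ = (n * (1 - 1 / r)) * k * (r.factorial * (1 - 1 / r)) := by ring
    _ ≤ (q * r ^ k : ℝ) * k * (r.factorial - 1) := by gcongr
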